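/- arXiv:0705.3261 — 4 statements merged into one kernel-verified Lean document; each statement's English description precedes it below -/
import Mathlib

section
/- For any vectors h₁, …, h_M in ℂᴺ and any real ρ ≥ 0, define for each i the (real, nonnegative) output signal-to-interference-plus-noise ratio SINR_i = ρ · h_iᴴ (I_N + ρ Σ_{j>i} h_j h_jᴴ)^{-1} h_i of the i-th stage of successive MMSE interference cancellation. Then det(I_N + ρ Σ_{i=1}^{M} h_i h_iᴴ) = Π_{i=1}^{M} (1 + SINR_i); in particular log₂ det(I_N + ρ Σ_{i=1}^{M} h_i h_iᴴ) = Σ_{i=1}^{M} log₂(1 + SINR_i), so V-BLAST MMSE detection with per-stream rates log₂(1 + SINR_i) achieves the MIMO capacity. -/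
open Matrix Filter

/-!
By the matrix determinant lemma, adding the rank-one term `ρ hᵢ hᵢᴴ` to
`Aᵢ = I + ρ ∑_{j>i} hⱼ hⱼᴴ` multiplies the determinant by `1 + ρ hᵢᴴ Aᵢ⁻¹ hᵢ = 1 + SINRᵢ`. Adding
the terms from the largest index down to the smallest telescopes, starting at `det I = 1`. The
lemma applies at every stage because each `Aᵢ` is positive definite; the same fact makes the
factors `1 + SINRᵢ` real and positive, so the logarithm of the product splits.
-/

section RankOneUpdates

variable {ι n R : Type*} [Fintype n] [DecidableEq n] [CommRing R]

theorem det_add_vecMulVec {A : Matrix n n R} (hA : IsUnit A.det) (u v : n → R) :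
    (A + vecMulVec u v).det = A.det * (1 + v ⬝ᵥ A⁻¹ *ᵥ u) := by
  rw [vecMulVec_eq Unit, det_add_replicateCol_mul_replicateRow hA, Matrix.mul_assoc,
    ← replicateCol_mulVec, det_unique (n := Unit), Matrix.add_apply, one_apply_eq,
    replicateRow_mul_replicateCol_apply]

theorem det_add_sum_vecMulVec [LinearOrder ι] (A : Matrix n n R) (u v : ι → n → R) (s : Finset ι)
    (hA : ∀ i ∈ s, IsUnit (A + ∑ j ∈ s with i < j, vecMulVec (u j) (v j)).det) :
    (A + ∑ i ∈ s, vecMulVec (u i) (v i)).det =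
      A.det * ∏ i ∈ s, (1 + v i ⬝ᵥ (A + ∑ j ∈ s with i < j, vecMulVec (u j) (v j))⁻¹ *ᵥ u i) := by
  induction s using Finset.induction_on_min with
  | empty => simp
  | insert a s a_lt ih =>
    have a_notMem : a ∉ s := fun ha => (a_lt a ha).false
    have filter_min : {j ∈ insert a s | a < j} = s := by
      rw [Finset.filter_insert, if_neg (lt_irrefl a), Finset.filter_true_of_mem a_lt]
    have filter_of_mem : ∀ i ∈ s, {j ∈ insert a s | i < j} = {j ∈ s | i < j} := fun i hi => by
      rw [Finset.filter_insert, if_neg (a_lt i hi).not_gt]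
    have isUnit_min := hA a (Finset.mem_insert_self a s)
    rw [filter_min] at isUnit_min
    have isUnit_of_mem : ∀ i ∈ s, IsUnit (A + ∑ j ∈ s with i < j, vecMulVec (u j) (v j)).det :=
      fun i hi => filter_of_mem i hi ▸ hA i (Finset.mem_insert_of_mem hi)
    rw [Finset.sum_insert a_notMem, add_comm (vecMulVec _ _), ← add_assoc,
      det_add_vecMulVec isUnit_min, ih isUnit_of_mem, Finset.prod_insert a_notMem, filter_min,
      mul_assoc, mul_comm (∏ i ∈ s, _)]
    congr 2
    exact Finset.prod_congr rfl fun i hi => by rw [filter_of_mem i hi]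

end RankOneUpdates

section SuccessiveCancellation

open scoped ComplexOrder

variable {ι n 𝕜 : Type*} [DecidableEq n] [RCLike 𝕜]

/-- The covariance matrix `I + ρ ∑_{j ∈ s} hⱼ hⱼᴴ` of the received signal when the streams in `s`
are active, with channel vectors `h`, signal-to-noise ratio `ρ` and noise normalized to unit
covariance. -/
def receivedCovariance (ρ : ℝ) (h : ι → n → 𝕜) (s : Finset ι) : Matrix n n 𝕜 :=
  1 + (ρ : 𝕜) • ∑ j ∈ s, vecMulVec (h j) (star (h j))

theorem receivedCovariance_eq_one_add_sum (ρ : ℝ) (h : ι → n → 𝕜) (s : Finset ι) :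
    receivedCovariance ρ h s = 1 + ∑ j ∈ s, vecMulVec ((ρ : 𝕜) • h j) (star (h j)) := by
  simp only [receivedCovariance, Finset.smul_sum, smul_vecMulVec]

variable {ρ : ℝ}

theorem posDef_receivedCovariance [Finite n] (hρ : 0 ≤ ρ) (h : ι → n → 𝕜) (s : Finset ι) :
    (receivedCovariance ρ h s).PosDef :=
  PosDef.one.add_posSemidef <|
    (posSemidef_sum s fun j _ => posSemidef_vecMulVec_self_star (h j)).smul
      (RCLike.ofReal_nonneg.2 hρ)

variable [Fintype n] [Fintype ι] [LinearOrder ι]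

/-- The output signal-to-interference-plus-noise ratio of stage `i` of successive MMSE interference
cancellation: streams are decoded in increasing order, so exactly the streams `j > i` still
interfere. It is real-valued by taking the real part of a quadratic form that is itself real when
`0 ≤ ρ`. -/
noncomputable def mmseSINR (ρ : ℝ) (h : ι → n → 𝕜) (i : ι) : ℝ :=
  ρ * RCLike.re (star (h i) ⬝ᵥ (receivedCovariance ρ h {j | i < j})⁻¹ *ᵥ h i)

theorem mmseSINR_nonneg (hρ : 0 ≤ ρ) (h : ι → n → 𝕜) (i : ι) : 0 ≤ mmseSINR ρ h i :=
  mul_nonneg hρ ((posDef_receivedCovariance hρ h _).inv.posSemidef.re_dotProduct_nonneg (h i))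

theorem ofReal_mmseSINR (hρ : 0 ≤ ρ) (h : ι → n → 𝕜) (i : ι) :
    (mmseSINR ρ h i : 𝕜) =
      star (h i) ⬝ᵥ (receivedCovariance ρ h {j | i < j})⁻¹ *ᵥ ((ρ : 𝕜) • h i) := by
  have quadForm_im := (posDef_receivedCovariance hρ h {j | i < j}).inv.isHermitian
    |>.im_star_dotProduct_mulVec_self (h i)
  rw [mmseSINR, RCLike.ofReal_mul, RCLike.conj_eq_iff_re.1 (RCLike.conj_eq_iff_im.2 quadForm_im),
    mulVec_smul, dotProduct_smul, smul_eq_mul]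

theorem det_receivedCovariance_univ (hρ : 0 ≤ ρ) (h : ι → n → 𝕜) :
    (receivedCovariance ρ h Finset.univ).det = ((∏ i, (1 + mmseSINR ρ h i) : ℝ) : 𝕜) := by
  have isUnit_det (i : ι) : IsUnit (receivedCovariance ρ h {j | i < j}).det :=
    (isUnit_iff_isUnit_det _).1 (posDef_receivedCovariance hρ h _).isUnit
  simp only [receivedCovariance_eq_one_add_sum] at isUnit_det
  rw [receivedCovariance_eq_one_add_sum, det_add_sum_vecMulVec _ _ _ _ fun i _ => isUnit_det i]
  simp only [← receivedCovariance_eq_one_add_sum, ← ofReal_mmseSINR hρ, det_one, one_mul,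
    RCLike.ofReal_prod, RCLike.ofReal_add, RCLike.ofReal_one]

theorem stmt2_general (hρ : 0 ≤ ρ) (h : ι → n → 𝕜) :
    (receivedCovariance ρ h Finset.univ).det = ((∏ i, (1 + mmseSINR ρ h i) : ℝ) : 𝕜) ∧
    Real.logb 2 (RCLike.re (receivedCovariance ρ h Finset.univ).det) =
      ∑ i, Real.logb 2 (1 + mmseSINR ρ h i) := by
  have det_eq := det_receivedCovariance_univ hρ h
  refine ⟨det_eq, ?_⟩
  rw [det_eq, RCLike.ofReal_re]
  exact Real.logb_prod _ _ fun i _ =>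
    (add_pos_of_pos_of_nonneg one_pos <| mmseSINR_nonneg hρ h i).ne'

end SuccessiveCancellation

/-- With `SINR i = ρ · hᵢᴴ (I + ρ ∑_{j>i} hⱼ hⱼᴴ)⁻¹ hᵢ` (the output
SINR of the i-th stage of successive MMSE interference cancellation),
`det(I + ρ ∑ᵢ hᵢ hᵢᴴ) = ∏ᵢ (1 + SINR i)`, and taking `log₂`,
`log₂ det(I + ρ ∑ᵢ hᵢ hᵢᴴ) = ∑ᵢ log₂(1 + SINR i)`. -/
theorem stmt2 (N M : ℕ) (h : Fin M → Fin N → ℂ) (ρ : ℝ) (hρ : 0 ≤ ρ)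
    (SINR : Fin M → ℝ)
    (hSINR : ∀ i, SINR i = ρ *
      (star (h i) ⬝ᵥ
        ((1 + (ρ : ℂ) • ∑ j ∈ Finset.univ.filter (fun j => i < j),
            Matrix.vecMulVec (h j) (star (h j)))⁻¹).mulVec (h i)).re) :
    ((1 + (ρ : ℂ) • ∑ i : Fin M, Matrix.vecMulVec (h i) (star (h i))).det).re
        = ∏ i : Fin M, (1 + SINR i) ∧
    Real.logb 2 ((1 + (ρ : ℂ) • ∑ i : Fin M,
        Matrix.vecMulVec (h i) (star (h i))).det).re
      = ∑ i : Fin M, Real.logb 2 (1 + SINR i) := by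
  obtain rfl : SINR = mmseSINR ρ h := funext hSINR
  have ⟨det_eq, log_det_eq⟩ := stmt2_general hρ h
  exact ⟨congrArg Complex.re det_eq, log_det_eq⟩
end

section
/- Fix an integer m ≥ 1 and reals v₀, v₁, …, v_m ≥ 0, and set v = max{v₁, …, v_m}. For ρ > 1 let H(ρ) be the (m+1)×m matrix with H(ρ)_{k,k} = ρ^{−v₀/2} for 1 ≤ k ≤ m, H(ρ)_{k+1,k} = ρ^{−v_k/2} for 1 ≤ k ≤ m, and all other entries zero. Then liminf_{ρ→∞} log det(I_{m+1} + (ρ/2) H(ρ) H(ρ)ᴴ) / log ρ ≥ max{m(1 − v₀), m(1 − v), 0}. -/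
open Matrix Filter

/-!
By multilinearity, `det (1 + A)` is the sum of all principal minors of `A`. For positive
semidefinite `A` these are nonnegative, so each single one bounds `det (1 + A)` from below. With
`A = (ρ / 2) H Hᴴ`, the empty minor is `1`, and deleting the last or the first row of `H` gives
the minor `(ρ / 2) ^ m |det T|²`, where `T` is triangular with the diagonal or the subdiagonal of
`H` on its diagonal. Hence, up to constants, `det (1 + A)` dominates the three powers of `ρ` whose
exponents form the claimed maximum.
-/

section PrincipalMinors

open Finset
open scoped ComplexOrder

variable {k m n R 𝕜 : Type*} [Fintype k] [DecidableEq k] [Fintype m] [DecidableEq m]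
  [Fintype n] [DecidableEq n] [CommRing R] [RCLike 𝕜]

lemma det_one_add_eq_sum_det_submatrix (A : Matrix n n R) :
    (1 + A).det = ∑ s : Finset n, (A.submatrix ((↑) : s → n) (↑)).det := by
  calc (1 + A).det = ∑ s : Finset n, (of (s.piecewise A.row (1 : Matrix n n R).row)).det := by
        rw [add_comm]
        exact (detRowAlternating : (n → R) [⋀^n]→ₗ[R] R).map_add_univ A.row (1 : Matrix n n R).row
    _ = ∑ s : Finset n, (A.submatrix ((↑) : s → n) (↑)).det :=
        sum_congr rfl fun s _ => det_piecewise_one_eq_submatrix_det A s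

lemma det_submatrix_le_det_one_add {A : Matrix n n 𝕜} (hA : A.PosSemidef) {f : k → n}
    (hf : f.Injective) : (A.submatrix f f).det ≤ (1 + A).det := by
  let e : k ≃ univ.map ⟨f, hf⟩ :=
    (Equiv.ofInjective f hf).trans (Equiv.subtypeEquivRight fun i => by simp)
  have hminor : (A.submatrix f f).det =
      (A.submatrix ((↑) : univ.map ⟨f, hf⟩ → n) (↑)).det := by
    rw [← det_submatrix_equiv_self e, submatrix_submatrix]
    rfl
  rw [hminor, det_one_add_eq_sum_det_submatrix]
  exact single_le_sum (f := fun s : Finset n => (A.submatrix ((↑) : s → n) (↑)).det)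
    (fun s _ => (hA.submatrix _).det_nonneg) (mem_univ (univ.map ⟨f, hf⟩))

lemma one_le_det_one_add {A : Matrix n n 𝕜} (hA : A.PosSemidef) : 1 ≤ (1 + A).det := by
  simpa using det_submatrix_le_det_one_add hA (Function.injective_of_subsingleton Empty.elim)

lemma pow_mul_norm_det_submatrix_sq_le_det (H : Matrix m n 𝕜) {f : n → m} (hf : f.Injective)
    {c : 𝕜} (hc : 0 ≤ c) :
    c ^ Fintype.card n * (‖(H.submatrix f id).det‖ : 𝕜) ^ 2 ≤ (1 + c • (H * Hᴴ)).det := by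
  have hgram : (c • (H * Hᴴ)).submatrix f f = c • (H.submatrix f id * (H.submatrix f id)ᴴ) := by
    ext i j
    simp [mul_apply]
  calc c ^ Fintype.card n * (‖(H.submatrix f id).det‖ : 𝕜) ^ 2
      = ((c • (H * Hᴴ)).submatrix f f).det := by
        rw [hgram, det_smul, det_mul, det_conjTranspose, RCLike.star_def, RCLike.mul_conj]
    _ ≤ _ :=
        det_submatrix_le_det_one_add ((posSemidef_self_mul_conjTranspose H).smul hc) hf

end PrincipalMinors

section Growth

open Asymptotics Finset

variable {α m n R : Type*} [Fintype m] [DecidableEq m] [Fintype n] [NormedCommRing R]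
  {l : Filter α} {g : α → ℝ}

lemma isBigO_det {M : α → Matrix m m R} (hM : ∀ i j, (fun x => M x i j) =O[l] g) :
    (fun x => (M x).det) =O[l] fun x => g x ^ Fintype.card m := by
  simp only [det_apply']
  refine IsBigO.fun_sum fun σ _ => IsBigO.const_mul_left ?_ _
  simpa using IsBigO.finsetProd (s := univ) fun i _ => hM (σ i) i

lemma isBigO_det_one_add_smul_mul_conjTranspose [StarRing R] [NormedStarGroup R]
    {H : α → Matrix m n R} {c : α → R} (hg : (fun _ => (1 : ℝ)) =O[l] g) (hc : c =O[l] g)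
    (hH : ∀ i j, (fun x => H x i j) =O[l] g) :
    (fun x => (1 + c x • (H x * (H x)ᴴ)).det) =O[l]
      fun x => (g x * (g x * g x)) ^ Fintype.card m := by
  refine isBigO_det fun i j => ?_
  have hone : (fun _ => (1 : Matrix m m R) i j) =O[l] fun x => g x * (g x * g x) := by
    refine (isBigO_const_const _ (one_ne_zero (α := ℝ)) l).trans ?_
    simpa using hg.mul (hg.mul hg)
  have hstar : ∀ k, (fun x => star (H x j k)) =O[l] g := fun k =>
    .of_norm_left <| by simpa only [norm_star] using (hH j k).norm_left
  simp only [Matrix.add_apply, Matrix.smul_apply, mul_apply, conjTranspose_apply, smul_eq_mul]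
  exact hone.add (hc.mul (IsBigO.fun_sum fun k _ => (hH i k).mul (hstar k)))

lemma isBigO_rpow_atTop_of_le {a b : ℝ} (hab : a ≤ b) :
    (fun ρ : ℝ => ρ ^ a) =O[atTop] fun ρ => ρ ^ b := by
  refine .of_norm_eventuallyLE ?_
  filter_upwards [eventually_ge_atTop 1] with ρ hρ
  rw [Real.norm_of_nonneg (by positivity)]
  exact Real.rpow_le_rpow_of_exponent_le hρ hab

lemma isBoundedUnder_le_log_div_log {f : ℝ → ℝ} {b : ℝ} (hf : f =O[atTop] fun ρ => ρ ^ b) :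
    IsBoundedUnder (· ≤ ·) atTop fun ρ => Real.log (f ρ) / Real.log ρ := by
  obtain ⟨C, hC, hfC⟩ := hf.exists_pos
  refine isBoundedUnder_of_eventually_le (a := |Real.log C| + |b|) ?_
  filter_upwards [hfC.bound, eventually_gt_atTop 0,
    Real.tendsto_log_atTop.eventually_ge_atTop 1] with ρ hle hρ hlog
  rcases eq_or_ne (f ρ) 0 with hzero | hne
  · rw [hzero, Real.log_zero, zero_div]
    positivity
  · have hlogf : Real.log (f ρ) ≤ Real.log C + b * Real.log ρ := by
      rw [← Real.log_rpow hρ, ← Real.log_mul hC.ne' (by positivity), ← Real.log_abs (f ρ)]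
      rw [Real.norm_eq_abs, Real.norm_of_nonneg (by positivity)] at hle
      exact Real.log_le_log (abs_pos.2 hne) hle
    rw [div_le_iff₀ (by linarith)]
    calc Real.log (f ρ) ≤ Real.log C + b * Real.log ρ := hlogf
      _ ≤ |Real.log C| * Real.log ρ + |b| * Real.log ρ := by
          gcongr
          · exact (le_abs_self _).trans (le_mul_of_one_le_right (abs_nonneg _) hlog)
          · exact le_abs_self b
      _ = (|Real.log C| + |b|) * Real.log ρ := by ring

/-- The upper bound is what makes the real-valued `liminf` meaningful: it is `0` for functions
tending to infinity. -/
lemma le_liminf_log_div_log {f : ℝ → ℝ} {a b : ℝ} (hlower : (fun ρ => ρ ^ a) =O[atTop] f)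
    (hupper : f =O[atTop] fun ρ => ρ ^ b) :
    a ≤ liminf (fun ρ => Real.log (f ρ) / Real.log ρ) atTop := by
  obtain ⟨C, hC, hCf⟩ := hlower.exists_pos
  have hlim : Tendsto (fun ρ => a - Real.log C / Real.log ρ) atTop (nhds a) := by
    simpa using tendsto_const_nhds.sub (Real.tendsto_log_atTop.const_div_atTop (Real.log C))
  rw [← hlim.liminf_eq]
  refine liminf_le_liminf ?_ hlim.isBoundedUnder_ge
    (isBoundedUnder_le_log_div_log hupper).isCoboundedUnder_ge
  filter_upwards [hCf.bound, eventually_gt_atTop 1] with ρ hle hρ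
  have hρ₀ : 0 < ρ := by linarith
  have hlogρ : 0 < Real.log ρ := Real.log_pos hρ
  rw [Real.norm_of_nonneg (by positivity), Real.norm_eq_abs] at hle
  have hf : 0 < |f ρ| := pos_of_mul_pos_right ((Real.rpow_pos_of_pos hρ₀ a).trans_le hle) hC.le
  have hlog : a * Real.log ρ ≤ Real.log C + Real.log (f ρ) := by
    rw [← Real.log_rpow hρ₀, ← Real.log_abs (f ρ), ← Real.log_mul hC.ne' hf.ne']
    exact Real.log_le_log (by positivity) hle
  rw [le_div_iff₀ hlogρ, sub_mul, div_mul_cancel₀ _ hlogρ.ne']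
  linarith

end Growth

section LowerBidiagonal

variable {R : Type*} {m : ℕ}

/-- The `(m + 1) × m` matrix with diagonal `a`, subdiagonal `b` and zeros elsewhere: the shape of
the successive-relaying channel matrix. Positions are compared as natural numbers because rows and
columns have different index types. -/
def lowerBidiagonal [Zero R] (a b : Fin m → R) : Matrix (Fin (m + 1)) (Fin m) R :=
  of fun i j => if (i : ℕ) = j then a j else if (i : ℕ) = j + 1 then b j else 0

variable [CommRing R]

lemma det_lowerBidiagonal_submatrix_castSucc (a b : Fin m → R) :
    ((lowerBidiagonal a b).submatrix Fin.castSucc id).det = ∏ j, a j := by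
  rw [det_of_isLowerTriangular]
  · simp [lowerBidiagonal]
  · intro i j (hij : i < j)
    have hne : (i : ℕ) ≠ j := by lia
    have hne' : (i : ℕ) ≠ j + 1 := by lia
    simp [lowerBidiagonal, hne, hne']

lemma det_lowerBidiagonal_submatrix_succ (a b : Fin m → R) :
    ((lowerBidiagonal a b).submatrix Fin.succ id).det = ∏ j, b j := by
  rw [det_of_isUpperTriangular]
  · simp [lowerBidiagonal]
  · intro i j (hij : j < i)
    have hne : (i : ℕ) + 1 ≠ j := by lia
    have hne' : (i : ℕ) ≠ j := by lia
    simp [lowerBidiagonal, hne, hne']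

end LowerBidiagonal

section Channel

open Asymptotics Finset
open scoped ComplexOrder

lemma pow_mul_norm_prod_rpow_sq {n : Type*} [Fintype n] {ρ : ℝ} (hρ : 0 < ρ) (w : n → ℝ) :
    ρ ^ Fintype.card n * ‖∏ j, ((ρ ^ (-(w j / 2)) : ℝ) : ℂ)‖ ^ 2 = ρ ^ ∑ j, (1 - w j) := by
  rw [norm_prod, ← prod_pow, ← card_univ, ← prod_const, ← prod_mul_distrib,
    Real.rpow_sum_of_pos hρ]
  refine prod_congr rfl fun j _ => ?_
  rw [Complex.norm_of_nonneg (by positivity), ← Real.rpow_mul_natCast hρ.le,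
    sub_eq_add_neg, Real.rpow_add hρ, Real.rpow_one]
  congr 2
  push_cast
  ring

variable {m n : Type*} [Fintype m] [DecidableEq m] [Fintype n]

lemma rpow_sum_le_two_pow_mul_re_det [DecidableEq n] {H : Matrix m n ℂ} {f : n → m}
    (hf : f.Injective) {ρ : ℝ} (hρ : 0 < ρ) {w : n → ℝ}
    (hdet : (H.submatrix f id).det = ∏ j, ((ρ ^ (-(w j / 2)) : ℝ) : ℂ)) :
    ρ ^ ∑ j, (1 - w j) ≤
      2 ^ Fintype.card n * (1 + ((ρ / 2 : ℝ) : ℂ) • (H * Hᴴ)).det.re := by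
  have hminor : (((ρ / 2) ^ Fintype.card n * ‖(H.submatrix f id).det‖ ^ 2 : ℝ) : ℂ) ≤
      (1 + ((ρ / 2 : ℝ) : ℂ) • (H * Hᴴ)).det := by
    simpa using pow_mul_norm_det_submatrix_sq_le_det H hf
      (Complex.zero_le_real.2 (half_pos hρ).le)
  calc ρ ^ ∑ j, (1 - w j)
      = 2 ^ Fintype.card n * ((ρ / 2) ^ Fintype.card n * ‖(H.submatrix f id).det‖ ^ 2) := by
        rw [hdet, ← mul_assoc, ← mul_pow, mul_div_cancel₀ ρ two_ne_zero,
          pow_mul_norm_prod_rpow_sq hρ]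
    _ ≤ _ := by
        gcongr
        exact (Complex.le_def.1 hminor).1

lemma one_isBigO_re_det (H : ℝ → Matrix m n ℂ) :
    (fun _ => (1 : ℝ)) =O[atTop]
      fun ρ : ℝ => (1 + ((ρ / 2 : ℝ) : ℂ) • (H ρ * (H ρ)ᴴ)).det.re := by
  refine .of_norm_eventuallyLE ?_
  filter_upwards [eventually_gt_atTop 0] with ρ hρ
  rw [norm_one]
  exact (Complex.le_def.1 (one_le_det_one_add ((posSemidef_self_mul_conjTranspose (H ρ)).smul
    (Complex.zero_le_real.2 (half_pos hρ).le)))).1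

variable {H : ℝ → Matrix m n ℂ}

lemma rpow_sum_isBigO_re_det [DecidableEq n] {f : n → m} (hf : f.Injective) {w : n → ℝ}
    (hdet : ∀ᶠ ρ in atTop,
      ((H ρ).submatrix f id).det = ∏ j, ((ρ ^ (-(w j / 2)) : ℝ) : ℂ)) :
    (fun ρ : ℝ => ρ ^ ∑ j, (1 - w j)) =O[atTop]
      fun ρ => (1 + ((ρ / 2 : ℝ) : ℂ) • (H ρ * (H ρ)ᴴ)).det.re := by
  refine IsBigO.trans (.of_norm_eventuallyLE ?_) (isBigO_const_mul_self (2 ^ Fintype.card n) _ _)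
  filter_upwards [hdet, eventually_gt_atTop 0] with ρ hminor hρ
  rw [Real.norm_of_nonneg (by positivity)]
  exact rpow_sum_le_two_pow_mul_re_det hf hρ hminor

lemma re_det_isBigO_rpow {K : ℝ} (hK : 1 ≤ K)
    (hH : ∀ i j, (fun ρ => H ρ i j) =O[atTop] fun ρ : ℝ => ρ ^ K) :
    (fun ρ : ℝ => (1 + ((ρ / 2 : ℝ) : ℂ) • (H ρ * (H ρ)ᴴ)).det.re) =O[atTop]
      fun ρ => ρ ^ ((K + (K + K)) * Fintype.card m) := by
  have hone : (fun _ => (1 : ℝ)) =O[atTop] fun ρ : ℝ => ρ ^ K := by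
    simpa using isBigO_rpow_atTop_of_le (zero_le_one.trans hK)
  have hhalf : (fun ρ : ℝ => ((ρ / 2 : ℝ) : ℂ)) =O[atTop] fun ρ => ρ ^ K := by
    refine Complex.isBigO_ofReal_left.2 ?_
    simpa [div_eq_inv_mul] using (isBigO_rpow_atTop_of_le hK).const_mul_left 2⁻¹
  have hre : (fun ρ : ℝ => (1 + ((ρ / 2 : ℝ) : ℂ) • (H ρ * (H ρ)ᴴ)).det.re) =O[atTop]
      fun ρ => (1 + ((ρ / 2 : ℝ) : ℂ) • (H ρ * (H ρ)ᴴ)).det :=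
    isBigO_of_le _ fun ρ => Complex.abs_re_le_norm _
  refine (hre.trans (isBigO_det_one_add_smul_mul_conjTranspose hone hhalf hH)).trans_eventuallyEq ?_
  filter_upwards [eventually_gt_atTop 0] with ρ hρ
  rw [Real.rpow_mul_natCast hρ.le, Real.rpow_add hρ, Real.rpow_add hρ]

lemma exists_lowerBidiagonal_rpow_isBigO_rpow {m : ℕ} (u v : Fin m → ℝ) :
    ∃ K : ℝ, 1 ≤ K ∧ ∀ i j,
      (fun ρ : ℝ => lowerBidiagonal (fun j => ((ρ ^ (-(u j / 2)) : ℝ) : ℂ))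
        (fun j => ((ρ ^ (-(v j / 2)) : ℝ) : ℂ)) i j) =O[atTop] fun ρ => ρ ^ K := by
  refine ⟨1 + ∑ j, (|u j| + |v j|),
    le_add_of_nonneg_right (sum_nonneg fun j _ => by positivity), fun i j => ?_⟩
  have hj : |u j| + |v j| ≤ ∑ j, (|u j| + |v j|) :=
    single_le_sum (f := fun j => |u j| + |v j|) (fun j _ => by positivity) (mem_univ j)
  simp only [lowerBidiagonal, of_apply]
  split_ifs
  · exact Complex.isBigO_ofReal_left.2 (isBigO_rpow_atTop_of_le (by grind))
  · exact Complex.isBigO_ofReal_left.2 (isBigO_rpow_atTop_of_le (by grind))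
  · exact isBigO_zero _ _

end Channel

theorem stmt10_general {m : ℕ} (u v : Fin m → ℝ) (H : ℝ → Matrix (Fin (m + 1)) (Fin m) ℂ)
    (hH : ∀ᶠ ρ in atTop, H ρ = lowerBidiagonal (fun j => ((ρ ^ (-(u j / 2)) : ℝ) : ℂ))
      fun j => ((ρ ^ (-(v j / 2)) : ℝ) : ℂ)) :
    max (max (∑ j, (1 - u j)) (∑ j, (1 - v j))) 0 ≤
      liminf (fun ρ : ℝ =>
        Real.log ((1 + ((ρ / 2 : ℝ) : ℂ) • (H ρ * (H ρ)ᴴ)).det.re) / Real.log ρ) atTop := by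
  obtain ⟨K, hK, hentry⟩ := exists_lowerBidiagonal_rpow_isBigO_rpow u v
  have hupper := re_det_isBigO_rpow hK fun i j =>
    EventuallyEq.trans_isBigO (hH.mono fun ρ h => congrFun₂ h i j) (hentry i j)
  refine max_le (max_le ?_ ?_) ?_
  · refine le_liminf_log_div_log
      (rpow_sum_isBigO_re_det (Fin.castSucc_injective m) (hH.mono fun ρ h => ?_)) hupper
    rw [h, det_lowerBidiagonal_submatrix_castSucc]
  · refine le_liminf_log_div_log
      (rpow_sum_isBigO_re_det (Fin.succ_injective m) (hH.mono fun ρ h => ?_)) hupper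
    rw [h, det_lowerBidiagonal_submatrix_succ]
  · exact le_liminf_log_div_log (by simpa using one_isBigO_re_det H) hupper

/-- With `H(ρ)` the `(m+1) × m` successive-relaying channel matrix
whose diagonal entries are `ρ^{−v₀/2}` and subdiagonal entries `ρ^{−v_k/2}`,
and `V = max{v₁,…,v_m}`,
`liminf_{ρ→∞} log det(I + (ρ/2) H(ρ) H(ρ)ᴴ) / log ρ ≥ max{m(1−v₀), m(1−V), 0}`. -/
theorem stmt10 (m : ℕ) (hm : 1 ≤ m) (v₀ : ℝ) (hv₀ : 0 ≤ v₀)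
    (v : Fin m → ℝ) (hv : ∀ k, 0 ≤ v k) (V : ℝ) (hV : IsGreatest (Set.range v) V)
    (H : ℝ → Matrix (Fin (m + 1)) (Fin m) ℂ)
    (hH : ∀ ρ : ℝ, 1 < ρ → ∀ i j, H ρ i j =
      if (i : ℕ) = (j : ℕ) then ((ρ ^ (-(v₀ / 2)) : ℝ) : ℂ)
      else if (i : ℕ) = (j : ℕ) + 1 then ((ρ ^ (-(v j / 2)) : ℝ) : ℂ) else 0) :
    max (max ((m : ℝ) * (1 - v₀)) ((m : ℝ) * (1 - V))) 0 ≤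
      Filter.liminf (fun ρ : ℝ =>
          Real.log (((1 + ((ρ / 2 : ℝ) : ℂ) •
              (H ρ * (H ρ).conjTranspose)).det).re) / Real.log ρ)
        Filter.atTop := by
  have hconst : (m : ℝ) * (1 - v₀) = ∑ _j : Fin m, (1 - v₀) := by
    simp [mul_one_sub]
  have hsum : (m : ℝ) * (1 - V) ≤ ∑ j, (1 - v j) := by
    simpa using Finset.card_nsmul_le_sum Finset.univ (fun j => 1 - v j) (1 - V) fun j _ =>
      sub_le_sub_left (hV.2 ⟨j, rfl⟩) 1
  exact (max_le_max_right 0 (max_le_max hconst.le hsum)).trans <|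
    stmt10_general (fun _ => v₀) v H <|
      (eventually_gt_atTop 1).mono fun ρ hρ => Matrix.ext (hH ρ hρ)
end

section
/- Let X₀ and X₁ be independent random variables, each exponentially distributed with rate 1, and fix a real t > 0. Then lim_{ρ→∞} −log P(X₀ + X₁ ≤ t/ρ) / log ρ = 2. That is, at any fixed target rate the outage probability of a codeword received over the direct link plus one relayed link decays like ρ^{−2}: the successive relaying scheme has maximal diversity gain 2. -/
open Filter MeasureTheory ProbabilityTheory

/-!
For nonnegative `X` and `Y` the event `X + Y ≤ s` lies between `{X ≤ s/2} ∩ {Y ≤ s/2}` and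
`{X ≤ s} ∩ {Y ≤ s}`. By independence, lower tails of order `s ^ a` and `s ^ b` as `s → 0⁺`
therefore multiply to one of order `s ^ (a + b)`. Constant factors are invisible on the logarithmic
scale, so only the exponent survives in the limit. An exponential variable has `a = 1`, since its
distribution function has a nonzero right derivative at `0`.
-/

open Asymptotics Real Topology

section LogarithmicScale

variable {α : Type*} {l : Filter α} {f g : α → ℝ}

lemma exists_eventually_log_sub_log_le_of_isBigO (h : f =O[l] g) (hf : ∀ᶠ x in l, f x ≠ 0) :
    ∃ K, ∀ᶠ x in l, log (f x) - log (g x) ≤ K := by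
  obtain ⟨C, hC, hfg⟩ := h.exists_pos
  refine ⟨log C, ?_⟩
  filter_upwards [hfg.bound, hf] with x hx hfx
  have hgx : g x ≠ 0 := fun h0 ↦ hfx <| by simpa [h0] using hx
  rw [sub_le_iff_le_add, ← log_mul hC.ne' hgx, ← log_abs (f x), ← log_abs (C * g x)]
  refine log_le_log (abs_pos.2 hfx) ?_
  simpa [abs_mul, abs_of_pos hC] using hx

lemma isBigO_one_log_sub_log_of_isTheta (h : f =Θ[l] g) (hg : ∀ᶠ x in l, g x ≠ 0) :
    (fun x ↦ log (f x) - log (g x)) =O[l] (fun _ ↦ (1 : ℝ)) := by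
  have hf : ∀ᶠ x in l, f x ≠ 0 := by
    filter_upwards [h.eq_zero_iff, hg] with x hx hgx using hx.not.2 hgx
  obtain ⟨K, hK⟩ := exists_eventually_log_sub_log_le_of_isBigO h.isBigO hf
  obtain ⟨L, hL⟩ := exists_eventually_log_sub_log_le_of_isBigO h.isBigO_symm hg
  refine .of_bound (max K L) ?_
  filter_upwards [hK, hL] with x hKx hLx
  rw [norm_one, mul_one, norm_eq_abs, abs_le']
  exact ⟨le_max_of_le_left hKx, le_max_of_le_right (by linarith)⟩

end LogarithmicScale

section PowerLaw

lemma isTheta_comp_tendsto {α β E F : Type*} [Norm E] [Norm F] {l : Filter α} {l' : Filter β}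
    {f : α → E} {g : α → F} {u : β → α} (h : f =Θ[l] g) (hu : Tendsto u l' l) :
    (f ∘ u) =Θ[l'] (g ∘ u) :=
  ⟨h.isBigO.comp_tendsto hu, h.isBigO_symm.comp_tendsto hu⟩

variable {f : ℝ → ℝ} {d c : ℝ}

lemma isTheta_rpow_comp_const_mul_nhdsGT_zero (h : f =Θ[𝓝[>] 0] (· ^ d)) (hc : 0 < c) :
    (fun s ↦ f (c * s)) =Θ[𝓝[>] 0] (· ^ d) := by
  have hscale : Tendsto (c * ·) (𝓝[>] 0) (𝓝[>] 0) :=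
    tendsto_iff_comap.2 (comap_mulLeft_nhdsGT_zero hc).ge
  have hpow : (fun s ↦ (c * s) ^ d) =ᶠ[𝓝[>] 0] fun s ↦ c ^ d * s ^ d := by
    filter_upwards [self_mem_nhdsWithin] with s hs using mul_rpow hc.le (le_of_lt hs)
  have hconst : (fun s ↦ c ^ d * s ^ d) =Θ[𝓝[>] 0] (· ^ d) :=
    (isTheta_const_mul_left (rpow_pos_of_pos hc d).ne').2 isTheta_rfl
  exact (isTheta_comp_tendsto h hscale).trans (hpow.trans_isTheta hconst)

lemma isTheta_rpow_neg_comp_const_div_atTop (h : f =Θ[𝓝[>] 0] (· ^ d)) (hc : 0 < c) :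
    (fun x ↦ f (c / x)) =Θ[atTop] (· ^ (-d)) := by
  have hinv := isTheta_comp_tendsto (isTheta_rpow_comp_const_mul_nhdsGT_zero h hc)
    tendsto_inv_atTop_nhdsGT_zero
  refine hinv.trans_eventuallyEq ?_
  filter_upwards [eventually_ge_atTop 0] with x hx
  simp only [Function.comp_apply, inv_rpow hx, rpow_neg hx]

lemma tendsto_log_div_log_of_isTheta_rpow (h : f =Θ[atTop] (· ^ d)) :
    Tendsto (fun x ↦ log (f x) / log x) atTop (𝓝 d) := by
  have hpow : ∀ᶠ x : ℝ in atTop, x ^ d ≠ 0 := by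
    filter_upwards [eventually_gt_atTop 0] with x hx using (rpow_pos_of_pos hx d).ne'
  have herror : Tendsto (fun x ↦ (log (f x) - log (x ^ d)) / log x) atTop (𝓝 0) :=
    ((isBigO_one_log_sub_log_of_isTheta h hpow).trans_isLittleO
      isLittleO_const_log_atTop).tendsto_div_nhds_zero
  refine (add_zero d ▸ herror.const_add d).congr' ?_
  filter_upwards [eventually_gt_atTop 1] with x hx
  have hlog : log x ≠ 0 := (log_pos hx).ne'
  rw [log_rpow (zero_lt_one.trans hx)]
  field_simp
  ring

end PowerLaw

section LowerTail

variable {Ω : Type*} [MeasurableSpace Ω] {μ : Measure Ω} {X Y : Ω → ℝ}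

lemma measureReal_le_inter_le_eq_mul (h : IndepFun X Y μ) (x y : ℝ) :
    μ.real ({ω | X ω ≤ x} ∩ {ω | Y ω ≤ y}) = μ.real {ω | X ω ≤ x} * μ.real {ω | Y ω ≤ y} := by
  simp only [measureReal_def, ← ENNReal.toReal_mul]
  exact congrArg _ <| h.measure_inter_preimage_eq_mul _ _ measurableSet_Iic measurableSet_Iic

variable [IsFiniteMeasure μ]

lemma measureReal_le_mul_le_measureReal_add_le (h : IndepFun X Y μ) (x y : ℝ) :
    μ.real {ω | X ω ≤ x} * μ.real {ω | Y ω ≤ y} ≤ μ.real {ω | X ω + Y ω ≤ x + y} := by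
  rw [← measureReal_le_inter_le_eq_mul h]
  exact measureReal_mono fun ω ⟨hXω, hYω⟩ ↦ Set.mem_ofPred.2 (add_le_add hXω hYω)

lemma measureReal_add_le_le_mul (h : IndepFun X Y μ) (hX : 0 ≤ᵐ[μ] X) (hY : 0 ≤ᵐ[μ] Y) (s : ℝ) :
    μ.real {ω | X ω + Y ω ≤ s} ≤ μ.real {ω | X ω ≤ s} * μ.real {ω | Y ω ≤ s} := by
  rw [← measureReal_le_inter_le_eq_mul h]
  refine ENNReal.toReal_mono (measure_ne_top _ _) (measure_mono_ae ?_)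
  filter_upwards [hX, hY] with ω hXω hYω hsum
  exact ⟨(le_add_of_nonneg_right hYω).trans hsum, (le_add_of_nonneg_left hXω).trans hsum⟩

lemma isTheta_rpow_measureReal_add_le {a b : ℝ} (h : IndepFun X Y μ)
    (hX : 0 ≤ᵐ[μ] X) (hY : 0 ≤ᵐ[μ] Y)
    (ha : (fun s ↦ μ.real {ω | X ω ≤ s}) =Θ[𝓝[>] 0] (· ^ a))
    (hb : (fun s ↦ μ.real {ω | Y ω ≤ s}) =Θ[𝓝[>] 0] (· ^ b)) :
    (fun s ↦ μ.real {ω | X ω + Y ω ≤ s}) =Θ[𝓝[>] 0] (· ^ (a + b)) := by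
  have hpow : (fun s : ℝ ↦ s ^ a * s ^ b) =ᶠ[𝓝[>] 0] (· ^ (a + b)) := by
    filter_upwards [self_mem_nhdsWithin] with s hs using (rpow_add hs a b).symm
  have hupper := (ha.mul hb).trans_eventuallyEq hpow
  have hlower := ((isTheta_rpow_comp_const_mul_nhdsGT_zero ha one_half_pos).mul
    (isTheta_rpow_comp_const_mul_nhdsGT_zero hb one_half_pos)).trans_eventuallyEq hpow
  constructor
  · refine .trans (.of_norm_le fun s ↦ ?_) hupper.isBigO
    rw [norm_of_nonneg measureReal_nonneg]
    exact measureReal_add_le_le_mul h hX hY s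
  · refine hlower.isBigO_symm.trans (.of_norm_le fun s ↦ ?_)
    rw [norm_of_nonneg (by positivity)]
    have hhalves : 1 / 2 * s + 1 / 2 * s = s := by ring
    simpa only [hhalves] using
      measureReal_le_mul_le_measureReal_add_le h (1 / 2 * s) (1 / 2 * s)

theorem stmt12_general {a b t : ℝ} (h : IndepFun X Y μ)
    (hX : 0 ≤ᵐ[μ] X) (hY : 0 ≤ᵐ[μ] Y)
    (ha : (fun s ↦ μ.real {ω | X ω ≤ s}) =Θ[𝓝[>] 0] (· ^ a))
    (hb : (fun s ↦ μ.real {ω | Y ω ≤ s}) =Θ[𝓝[>] 0] (· ^ b)) (ht : 0 < t) :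
    Tendsto (fun ρ ↦ -log (μ.real {ω | X ω + Y ω ≤ t / ρ}) / log ρ) atTop (𝓝 (a + b)) := by
  have htail := isTheta_rpow_neg_comp_const_div_atTop
    (isTheta_rpow_measureReal_add_le h hX hY ha hb) ht
  simpa only [neg_div, neg_neg] using (tendsto_log_div_log_of_isTheta_rpow htail).neg

end LowerTail

section Exponential

variable {r : ℝ}

lemma ae_expMeasure_pos (hr : 0 < r) : ∀ᵐ x ∂expMeasure r, 0 < x := by
  have := isProbabilityMeasure_expMeasure hr
  have hcdf : (expMeasure r).real (Set.Iic 0) = 0 := by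
    simp [← cdf_eq_real, cdf_expMeasure_eq hr]
  simpa [ae_iff, Set.Iic] using (measureReal_eq_zero_iff).1 hcdf

lemma tendsto_cdf_expMeasure_div_nhdsGT_zero (hr : 0 < r) :
    Tendsto (fun s ↦ cdf (expMeasure r) s / s) (𝓝[>] 0) (𝓝 r) := by
  have hderiv : HasDerivAt (fun s ↦ -exp (-(r * s))) r 0 := by
    simpa using hasDerivAt_neg_exp_mul_exp (r := r) (x := 0)
  refine hderiv.tendsto_slope_zero_right.congr' ?_
  filter_upwards [self_mem_nhdsWithin] with s hs
  rw [cdf_expMeasure_eq hr, if_pos (le_of_lt hs), zero_add, mul_zero, neg_zero, exp_zero,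
    smul_eq_mul]
  ring

lemma isTheta_cdf_expMeasure_nhdsGT_zero (hr : 0 < r) :
    cdf (expMeasure r) =Θ[𝓝[>] 0] fun s ↦ s :=
  (isTheta_of_div_tendsto_nhds_ne_zero (tendsto_cdf_expMeasure_div_nhdsGT_zero hr) hr.ne').symm

variable {Ω : Type*} [MeasurableSpace Ω] {μ : Measure Ω} {X : Ω → ℝ}

lemma ae_nonneg_of_hasLaw_expMeasure (hX : HasLaw X (expMeasure r) μ) (hr : 0 < r) :
    0 ≤ᵐ[μ] X :=
  (hX.ae_iff (by fun_prop)).2 <| (ae_expMeasure_pos hr).mono fun _ ↦ le_of_lt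

lemma isTheta_measureReal_le_of_hasLaw_expMeasure (hX : HasLaw X (expMeasure r) μ) (hr : 0 < r) :
    (fun s ↦ μ.real {ω | X ω ≤ s}) =Θ[𝓝[>] 0] (· ^ (1 : ℝ)) := by
  have := isProbabilityMeasure_expMeasure hr
  have hcdf (s : ℝ) : μ.real {ω | X ω ≤ s} = cdf (expMeasure r) s := by
    rw [cdf_eq_real]
    exact hX.measureReal_eq measurableSet_Iic
  simpa only [hcdf, rpow_one] using isTheta_cdf_expMeasure_nhdsGT_zero hr

end Exponential

/-- If `X₀, X₁` are independent rate-1 exponential random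
variables and `t > 0`, then `−log P(X₀ + X₁ ≤ t/ρ) / log ρ → 2` as `ρ → ∞`:
the outage probability decays like `ρ^{−2}`, i.e. diversity gain 2. -/
theorem stmt12 {Ω : Type*} [MeasurableSpace Ω] (μ : Measure Ω)
    [IsProbabilityMeasure μ] (X₀ X₁ : Ω → ℝ)
    (hm0 : Measurable X₀) (hm1 : Measurable X₁)
    (h0 : Measure.map X₀ μ = expMeasure 1)
    (h1 : Measure.map X₁ μ = expMeasure 1)
    (hindep : IndepFun X₀ X₁ μ)
    (t : ℝ) (ht : 0 < t) :
    Tendsto (fun ρ : ℝ =>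
        -Real.log ((μ {ω | X₀ ω + X₁ ω ≤ t / ρ}).toReal) / Real.log ρ)
      atTop (nhds 2) := by
  have law₀ : HasLaw X₀ (expMeasure 1) μ := ⟨hm0.aemeasurable, h0⟩
  have law₁ : HasLaw X₁ (expMeasure 1) μ := ⟨hm1.aemeasurable, h1⟩
  rw [← one_add_one_eq_two]
  exact stmt12_general hindep
    (ae_nonneg_of_hasLaw_expMeasure law₀ one_pos) (ae_nonneg_of_hasLaw_expMeasure law₁ one_pos)
    (isTheta_measureReal_le_of_hasLaw_expMeasure law₀ one_pos)
    (isTheta_measureReal_le_of_hasLaw_expMeasure law₁ one_pos) ht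
end

section
/- If a ≠ 0, then for any complex numbers c₁, c₂, the ratio G(ρ) = [ (1/(L+1)) log₂ det(I_{L+1} + ρ H Hᴴ) ] / [ (1/2) log₂(1 + ρ(|a|² + |c₁|² + |c₂|²)) ] satisfies lim_{ρ→∞} G(ρ) = 2L/(L+1). That is, the asymptotic capacity gain of the successive relaying scheme over Classic Protocol II (distributed Alamouti relaying) equals 2L/(L+1), which exceeds 1 for all L ≥ 2 and tends to 2 as L → ∞. -/
open Matrix Filter

/-!
The gain is governed by the rank of the channel alone. If `λᵢ ≥ 0` are the eigenvalues of `H Hᴴ`,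
then `log det (I + ρ H Hᴴ) = ∑ᵢ log (1 + ρ λᵢ)`; each `λᵢ > 0` contributes a term asymptotic to
`log ρ`, each `λᵢ = 0` contributes nothing, and the number of positive `λᵢ` is `rank H`. The
reference rate is a single such term, so the quotient of the two logarithms tends to `rank H`. The
relaying matrix has full column rank because its first `L` rows form a lower triangular matrix with
constant diagonal `a ≠ 0`.
-/

theorem tendsto_log_one_add_mul_div_log {s : ℝ} (hs : 0 < s) :
    Tendsto (fun ρ : ℝ => Real.log (1 + ρ * s) / Real.log ρ) atTop (nhds 1) := by
  have h_factor : Tendsto (fun ρ : ℝ => ρ⁻¹ + s) atTop (nhds s) := by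
    simpa only [zero_add] using tendsto_inv_atTop_zero.add_const s
  have h_remainder :
      Tendsto (fun ρ : ℝ => 1 + Real.log (ρ⁻¹ + s) / Real.log ρ) atTop (nhds 1) := by
    simpa only [add_zero] using
      ((h_factor.log hs.ne').div_atTop Real.tendsto_log_atTop).const_add 1
  refine h_remainder.congr' ?_
  filter_upwards [eventually_gt_atTop 1] with ρ hρ
  have hρ₀ : 0 < ρ := one_pos.trans hρ
  have h_split : 1 + ρ * s = ρ * (ρ⁻¹ + s) := by field_simp
  rw [h_split, Real.log_mul hρ₀.ne' (by positivity), add_div, div_self (Real.log_pos hρ).ne']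

theorem tendsto_log_one_add_mul_div_log_of_nonneg {s : ℝ} (hs : 0 ≤ s) :
    Tendsto (fun ρ : ℝ => Real.log (1 + ρ * s) / Real.log ρ) atTop
      (nhds (if s ≠ 0 then 1 else 0)) := by
  rcases hs.eq_or_lt with rfl | hs
  · simp
  · simpa only [ne_eq, hs.ne', not_false_eq_true, if_true] using tendsto_log_one_add_mul_div_log hs

section LogDet

open scoped ComplexOrder

variable {𝕜 m n : Type*} [RCLike 𝕜] [Fintype m] [DecidableEq m] [Fintype n]

theorem det_one_add_smul_eq_prod_eigenvalues {A : Matrix m m 𝕜} (hA : A.IsHermitian) (t : 𝕜) :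
    (1 + t • A).det = ∏ i, (1 + t * (hA.eigenvalues i : 𝕜)) := by
  set U := hA.eigenvectorUnitary
  set D : Matrix m m 𝕜 := diagonal (RCLike.ofReal ∘ hA.eigenvalues)
  have h_conj : 1 + t • A = (U : Matrix m m 𝕜) * (1 + t • D) * star (U : Matrix m m 𝕜) := by
    conv_lhs => rw [hA.spectral_theorem]
    rw [← Unitary.conjStarAlgAut_apply (S := 𝕜), map_add, map_one, map_smul]
  have h_diag : 1 + t • D = diagonal fun i => 1 + t * (hA.eigenvalues i : 𝕜) := by
    rw [← diagonal_one, ← diagonal_smul, diagonal_add]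
    rfl
  rw [h_conj, det_mul_right_comm, Unitary.mul_star_self_of_mem U.prop, one_mul, h_diag,
    det_diagonal]

theorem re_det_one_add_ofReal_smul_eq_prod_eigenvalues {A : Matrix m m 𝕜} (hA : A.IsHermitian)
    (ρ : ℝ) : RCLike.re (1 + (ρ : 𝕜) • A).det = ∏ i, (1 + ρ * hA.eigenvalues i) := by
  rw [det_one_add_smul_eq_prod_eigenvalues hA]
  exact_mod_cast RCLike.ofReal_re (K := 𝕜) (∏ i, (1 + ρ * hA.eigenvalues i))

theorem tendsto_log_re_det_one_add_smul_div_log {A : Matrix m m 𝕜} (hA : A.PosSemidef) :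
    Tendsto (fun ρ : ℝ => Real.log (RCLike.re (1 + (ρ : 𝕜) • A).det) / Real.log ρ) atTop
      (nhds (A.rank : ℝ)) := by
  have h_rank : (A.rank : ℝ) = ∑ i, if hA.isHermitian.eigenvalues i ≠ 0 then (1 : ℝ) else 0 := by
    rw [hA.isHermitian.rank_eq_card_non_zero_eigs, Fintype.card_subtype, Finset.sum_boole]
  rw [h_rank]
  refine (tendsto_finsetSum _ fun i _ =>
    tendsto_log_one_add_mul_div_log_of_nonneg (hA.eigenvalues_nonneg i)).congr' ?_
  filter_upwards [eventually_ge_atTop 0] with ρ hρ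
  have h_pos : ∀ i, 0 < 1 + ρ * hA.isHermitian.eigenvalues i := fun i =>
    add_pos_of_pos_of_nonneg one_pos (mul_nonneg hρ (hA.eigenvalues_nonneg i))
  rw [re_det_one_add_ofReal_smul_eq_prod_eigenvalues hA.isHermitian,
    Real.log_prod fun i _ => (h_pos i).ne', Finset.sum_div]

theorem tendsto_log_re_det_div_log_one_add_mul (H : Matrix m n 𝕜) {s : ℝ} (hs : 0 < s) :
    Tendsto (fun ρ : ℝ =>
        Real.log (RCLike.re (1 + (ρ : 𝕜) • (H * Hᴴ)).det) / Real.log (1 + ρ * s))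
      atTop (nhds (H.rank : ℝ)) := by
  have h_quot := (tendsto_log_re_det_one_add_smul_div_log (posSemidef_self_mul_conjTranspose H)).div
    (tendsto_log_one_add_mul_div_log hs) one_ne_zero
  rw [rank_self_mul_conjTranspose, div_one] at h_quot
  refine h_quot.congr' ?_
  filter_upwards [eventually_gt_atTop 1] with ρ hρ
  exact div_div_div_cancel_right₀ (Real.log_pos hρ).ne' _ _

end LogDet

section Rank

variable {K m n : Type*} [Field K] [Fintype n]

theorem rank_eq_card_of_det_submatrix_ne_zero [DecidableEq n] (H : Matrix m n K) (r : n → m)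
    (h_det : (H.submatrix r id).det ≠ 0) : H.rank = Fintype.card n := by
  refine le_antisymm H.rank_le_card_width ?_
  rw [← rank_of_isUnit _ ((isUnit_iff_isUnit_det _).2 h_det.isUnit)]
  exact rank_submatrix_le H r id

theorem rank_eq_card_of_isLowerTriangular_submatrix [LinearOrder n] (H : Matrix m n K) (r : n → m)
    (h_lower : (H.submatrix r id).IsLowerTriangular) (h_diag : ∀ j, H (r j) j ≠ 0) :
    H.rank = Fintype.card n := by
  refine rank_eq_card_of_det_submatrix_ne_zero H r ?_
  rw [det_of_isLowerTriangular _ h_lower]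
  exact Finset.prod_ne_zero_iff.2 fun j _ => h_diag j

end Rank

theorem stmt15_general {𝕜 n : Type*} [RCLike 𝕜] [Fintype n] {L : ℕ}
    (H : Matrix (Fin (L + 1)) n 𝕜) {s : ℝ} (hs : 0 < s) :
    Tendsto (fun ρ : ℝ =>
        ((1 / ((L : ℝ) + 1)) * Real.logb 2 (RCLike.re (1 + (ρ : 𝕜) • (H * Hᴴ)).det)) /
          ((1 / 2) * Real.logb 2 (1 + ρ * s)))
      atTop (nhds (2 * (H.rank : ℝ) / ((L : ℝ) + 1))) := by
  have h_scaled := (tendsto_log_re_det_div_log_one_add_mul H hs).const_mul (2 / ((L : ℝ) + 1))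
  rw [div_mul_eq_mul_div] at h_scaled
  refine h_scaled.congr fun ρ => ?_
  rw [mul_div_mul_comm, Real.logb, Real.logb,
    div_div_div_cancel_right₀ (Real.log_pos one_lt_two).ne', div_div_eq_mul_div, div_one,
    one_div_mul_eq_div]

/-- For the successive-relaying channel matrix `H` with `a ≠ 0`
and any `c₁, c₂ ∈ ℂ`, the capacity gain
`G(ρ) = [(1/(L+1)) log₂ det(I + ρ H Hᴴ)] / [(1/2) log₂(1 + ρ(|a|²+|c₁|²+|c₂|²))]`
over Classic Protocol II tends to `2L/(L+1)` as `ρ → ∞`. -/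
theorem stmt15 (L : ℕ) (hL : 1 ≤ L) (a : ℂ) (ha : a ≠ 0) (b : Fin L → ℂ)
    (H : Matrix (Fin (L + 1)) (Fin L) ℂ)
    (hH : ∀ i j, H i j =
      if (i : ℕ) = (j : ℕ) then a else if (i : ℕ) = (j : ℕ) + 1 then b j else 0)
    (c₁ c₂ : ℂ) :
    Tendsto (fun ρ : ℝ =>
        ((1 / ((L : ℝ) + 1)) *
            Real.logb 2 ((1 + (ρ : ℂ) • (H * H.conjTranspose)).det).re) /
          ((1 / 2) * Real.logb 2 (1 + ρ * (‖a‖ ^ 2 + ‖c₁‖ ^ 2 + ‖c₂‖ ^ 2))))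
      atTop (nhds (2 * (L : ℝ) / ((L : ℝ) + 1))) := by
  have h_lower : (H.submatrix Fin.castSucc id).IsLowerTriangular := fun i j hij => by
    have hij' : (i : ℕ) < j := hij
    rw [submatrix_apply, hH, Fin.val_castSucc, id, if_neg (by omega), if_neg (by omega)]
  have h_diag (j : Fin L) : H j.castSucc j ≠ 0 := by simpa [hH] using ha
  have h_rank : H.rank = L := by
    rw [rank_eq_card_of_isLowerTriangular_submatrix H _ h_lower h_diag, Fintype.card_fin]
  have h_snr : 0 < ‖a‖ ^ 2 + ‖c₁‖ ^ 2 + ‖c₂‖ ^ 2 := by positivity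
  simpa only [h_rank, RCLike.re_eq_complex_re, Complex.coe_algebraMap] using stmt15_general H h_snr
end
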